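/- arXiv:1901.09813 — 12 statements merged into one kernel-verified Lean document; each statement's English description precedes it below -/
import Mathlib

section
/- For every context index j, PMI(w_*, c_j) = (∑_{i ∈ W} PMI(w_i, c_j)) + ρ^{W,w_*}_j + σ^W_j − τ^W. (Paper's Lemma 1: a single word's PMI column equals the sum of the PMI columns of a word set plus the paraphrase error, plus the conditional-dependence error, minus the marginal-dependence error.) -/
open MeasureTheory Real Finset Matrix

namespace AnalogiesExplained

variable {Ω : Type*}

/-- Conditional probability `p(B ∣ A) = μ(A ∩ B) / μ(A)` (as a real number). -/
noncomputable def condP [MeasurableSpace Ω] (μ : Measure Ω) (A B : Set Ω) : ℝ :=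
  (μ (A ∩ B)).toReal / (μ A).toReal

/-- Pointwise mutual information `PMI(A, B) = log (μ(A ∩ B) / (μ(A)·μ(B)))`. -/
noncomputable def PMI [MeasurableSpace Ω] (μ : Measure Ω) (A B : Set Ω) : ℝ :=
  Real.log ((μ (A ∩ B)).toReal / ((μ A).toReal * (μ B).toReal))

/-- The joint event of a finite word set: `A_W = ⋂ i ∈ W, A i`. -/
def jointEvent {ι : Type*} (A : ι → Set Ω) (W : Finset ι) : Set Ω :=
  ⋂ i ∈ W, A i

/-- Paraphrase error `ρ^{W,W*}_j = log (p(B_j ∣ A_{W*}) / p(B_j ∣ A_W))`. -/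
noncomputable def rho [MeasurableSpace Ω] (μ : Measure Ω) (AW AWstar B : Set Ω) : ℝ :=
  Real.log (condP μ AWstar B / condP μ AW B)

/-- Conditional-dependence error `σ^W_j = log (p(A_W ∣ B_j) / ∏_{i ∈ W} p(A_i ∣ B_j))`. -/
noncomputable def sigma [MeasurableSpace Ω] {ι : Type*} (μ : Measure Ω) (A : ι → Set Ω)
    (W : Finset ι) (B : Set Ω) : ℝ :=
  Real.log (condP μ B (jointEvent A W) / ∏ i ∈ W, condP μ B (A i))

/-- Marginal-dependence error `τ^W = log (μ(A_W) / ∏_{i ∈ W} μ(A_i))`. -/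
noncomputable def tau [MeasurableSpace Ω] {ι : Type*} (μ : Measure Ω) (A : ι → Set Ω)
    (W : Finset ι) : ℝ :=
  Real.log ((μ (jointEvent A W)).toReal / ∏ i ∈ W, (μ (A i)).toReal)

/-- **Lemma 1 (Paraphrase identity at the PMI level).** For every context index `j`,
`PMI(w_*, c_j) = (∑_{i ∈ W} PMI(w_i, c_j)) + ρ^{W,w_*}_j + σ^W_j − τ^W`. -/
theorem pmi_paraphrase_identity
    [MeasurableSpace Ω] (μ : Measure Ω) [IsProbabilityMeasure μ]
    {ι : Type*} (A : ι → Set Ω) (Astar : Set Ω) {n : ℕ} (B : Fin n → Set Ω)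
    (W : Finset ι)
    (hmA : ∀ i, MeasurableSet (A i)) (hmB : ∀ j, MeasurableSet (B j))
    (hmAs : MeasurableSet Astar)
    (hA : ∀ i ∈ W, 0 < (μ (A i)).toReal)
    (hB : ∀ j, 0 < (μ (B j)).toReal)
    (hAs : 0 < (μ Astar).toReal)
    (hAW : 0 < (μ (jointEvent A W)).toReal)
    (hAB : ∀ i ∈ W, ∀ j, 0 < (μ (A i ∩ B j)).toReal)
    (hAsB : ∀ j, 0 < (μ (Astar ∩ B j)).toReal)
    (hAWB : ∀ j, 0 < (μ (jointEvent A W ∩ B j)).toReal) :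
    ∀ j, PMI μ Astar (B j) =
      (∑ i ∈ W, PMI μ (A i) (B j))
        + rho μ (jointEvent A W) Astar (B j)
        + sigma μ A W (B j)
        - tau μ A W := by
  intro j
  have b := (hB j).ne'
  have as := hAs.ne'
  have aw := hAW.ne'
  have asb := (hAsB j).ne'
  have awb := (hAWB j).ne'
  have hS : ∑ i ∈ W, PMI μ (A i) (B j) =
      ∑ i ∈ W, (Real.log (condP μ (B j) (A i)) - Real.log (μ (A i)).toReal) := by
    refine Finset.sum_congr rfl fun i hi => ?_
    have a := (hA i hi).ne'
    have ab := (hAB i hi j).ne'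
    unfold PMI condP
    rw [Set.inter_comm (B j), Real.log_div ab (mul_ne_zero a b), Real.log_mul a b,
      Real.log_div ab b]
    ring
  have hc : ∀ i ∈ W, condP μ (B j) (A i) ≠ 0 := by
    intro i hi
    unfold condP
    rw [Set.inter_comm (B j)]
    exact div_ne_zero (hAB i hi j).ne' b
  have hsig : sigma μ A W (B j) = Real.log (μ (jointEvent A W ∩ B j)).toReal
      - Real.log (μ (B j)).toReal - ∑ i ∈ W, Real.log (condP μ (B j) (A i)) := by
    have h1 : condP μ (B j) (jointEvent A W) =
        (μ (jointEvent A W ∩ B j)).toReal / (μ (B j)).toReal := by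
      unfold condP
      rw [Set.inter_comm (B j)]
    unfold sigma
    rw [h1, Real.log_div (div_ne_zero awb b) (Finset.prod_ne_zero_iff.mpr hc),
      Real.log_div awb b, Real.log_prod hc]
  have htau : tau μ A W = Real.log (μ (jointEvent A W)).toReal
      - ∑ i ∈ W, Real.log (μ (A i)).toReal := by
    have ha : ∀ i ∈ W, (μ (A i)).toReal ≠ 0 := fun i hi => (hA i hi).ne'
    unfold tau
    rw [Real.log_div aw (Finset.prod_ne_zero_iff.mpr ha), Real.log_prod ha]
  rw [hS, hsig, htau, Finset.sum_sub_distrib]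
  unfold PMI rho condP
  rw [Real.log_div asb (mul_ne_zero as b), Real.log_mul as b,
    Real.log_div (div_ne_zero asb as) (div_ne_zero awb aw), Real.log_div asb as,
    Real.log_div awb aw]
  ring

end AnalogiesExplained
end

section
/- If w_* and each w_i (i ∈ W) have embeddings w⃗_* and w⃗_i with respect to C (i.e. Cᵀ.mulVec w⃗_i = PMI_i), then w⃗_* = (∑_{i∈W} w⃗_i) + C†.mulVec( ρ^{W,w_*} + σ^W − τ^W·𝟙 ), where ρ^{W,w_*}, σ^W ∈ ℝ^n are the vectors with components ρ^{W,w_*}_j, σ^W_j. (Paper's Theorem 1: Paraphrase.) -/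
open MeasureTheory Real Finset Matrix

namespace AnalogiesExplained

variable {Ω : Type*}

/-- **Theorem 1 (Paraphrase).** If `w_*` and each `w_i` (`i ∈ W`) have embeddings w.r.t. `C`,
then `w⃗_* = (∑_{i∈W} w⃗_i) + C† (ρ^{W,w_*} + σ^W − τ^W·𝟙)`, where `C† = (C Cᵀ)⁻¹ C`. -/
theorem paraphrase_embedding
    [MeasurableSpace Ω] (μ : Measure Ω) [IsProbabilityMeasure μ]
    {ι : Type*} (A : ι → Set Ω) (Astar : Set Ω) {n : ℕ} (B : Fin n → Set Ω)
    (W : Finset ι)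
    (hmA : ∀ i, MeasurableSet (A i)) (hmB : ∀ j, MeasurableSet (B j))
    (hmAs : MeasurableSet Astar)
    (hA : ∀ i ∈ W, 0 < (μ (A i)).toReal)
    (hB : ∀ j, 0 < (μ (B j)).toReal)
    (hAs : 0 < (μ Astar).toReal)
    (hAW : 0 < (μ (jointEvent A W)).toReal)
    (hAB : ∀ i ∈ W, ∀ j, 0 < (μ (A i ∩ B j)).toReal)
    (hAsB : ∀ j, 0 < (μ (Astar ∩ B j)).toReal)
    (hAWB : ∀ j, 0 < (μ (jointEvent A W ∩ B j)).toReal)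
    {d : ℕ} (C : Matrix (Fin d) (Fin n) ℝ)
    (hC : IsUnit (C * C.transpose))
    (wstar : Fin d → ℝ) (wv : ι → Fin d → ℝ)
    (hws : C.transpose.mulVec wstar = fun j => PMI μ Astar (B j))
    (hwi : ∀ i ∈ W, C.transpose.mulVec (wv i) = fun j => PMI μ (A i) (B j)) :
    wstar = (∑ i ∈ W, wv i)
      + ((C * C.transpose)⁻¹ * C).mulVec
          (fun j => rho μ (jointEvent A W) Astar (B j) + sigma μ A W (B j) - tau μ A W) := by
  have key : (fun j => rho μ (jointEvent A W) Astar (B j) + sigma μ A W (B j) - tau μ A W)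
      = C.transpose.mulVec (wstar - ∑ i ∈ W, wv i) := by
    rw [Matrix.mulVec_sub, Matrix.mulVec_sum, hws, Finset.sum_congr rfl hwi]
    funext j
    simp only [Pi.sub_apply, Finset.sum_apply]
    have hBj := (hB j).ne'
    have h1 := hAs.ne'
    have h2 := hAW.ne'
    have h3 := (hAsB j).ne'
    have h4 := (hAWB j).ne'
    have hP : ∀ i ∈ W, PMI μ (A i) (B j) = Real.log (condP μ (B j) (A i))
        - Real.log (μ (A i)).toReal := by
      intro i hi
      have h5 := (hA i hi).ne'
      have h6 := (hAB i hi j).ne'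
      unfold PMI condP
      rw [Set.inter_comm (B j), Real.log_div h6 (mul_ne_zero h5 hBj), Real.log_mul h5 hBj,
        Real.log_div h6 hBj]
      ring
    have hc : ∀ i ∈ W, condP μ (B j) (A i) ≠ 0 := by
      intro i hi
      unfold condP
      rw [Set.inter_comm (B j)]
      exact div_ne_zero (hAB i hi j).ne' hBj
    have hA' : ∀ i ∈ W, (μ (A i)).toReal ≠ 0 := fun i hi => (hA i hi).ne'
    rw [Finset.sum_congr rfl hP, Finset.sum_sub_distrib, ← Real.log_prod hc, ← Real.log_prod hA']
    have hcW : condP μ (B j) (jointEvent A W) ≠ 0 := by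
      unfold condP
      rw [Set.inter_comm (B j)]
      exact div_ne_zero h4 hBj
    unfold rho sigma tau
    rw [Real.log_div hcW (Finset.prod_ne_zero_iff.2 hc),
      Real.log_div h2 (Finset.prod_ne_zero_iff.2 hA'),
      show Real.log (condP μ Astar (B j) / condP μ (jointEvent A W) (B j))
        = Real.log ((μ (Astar ∩ B j)).toReal / (μ Astar).toReal
          / ((μ (jointEvent A W ∩ B j)).toReal / (μ (jointEvent A W)).toReal)) from rfl,
      Real.log_div (div_ne_zero h3 h1) (div_ne_zero h4 h2)]
    unfold PMI
    rw [show Real.log (condP μ (B j) (jointEvent A W))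
        = Real.log (μ (jointEvent A W ∩ B j)).toReal - Real.log (μ (B j)).toReal by
      unfold condP
      rw [Set.inter_comm (B j), Real.log_div h4 hBj]]
    rw [Real.log_div h3 h1, Real.log_div h4 h2, Real.log_div h3 (mul_ne_zero h1 hBj),
      Real.log_mul h1 hBj]
    ring
  rw [key, Matrix.mulVec_mulVec, Matrix.mul_assoc,
    Matrix.nonsing_inv_mul _ ((Matrix.isUnit_iff_isUnit_det _).1 hC), Matrix.one_mulVec]
  abel

end AnalogiesExplained
end

section
/- Let k > 0 and suppose w_* and each w_i (i ∈ W) have shifted embeddings with respect to C, i.e. Cᵀ.mulVec w⃗_i = PMI_i − (log k)·𝟙 for every word involved. Then w⃗_* = (∑_{i∈W} w⃗_i) + C†.mulVec( ρ^{W,w_*} + σ^W − τ^W·𝟙 + (log k)(|W| − 1)·𝟙 ). (Paper's Corollary 4: paraphrases in word2vec-type embeddings that factorise the shifted PMI matrix acquire an additional error term linear in |W|.) -/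
open MeasureTheory Real Finset Matrix

namespace AnalogiesExplained

variable {Ω : Type*}

/-- **Corollary 4 (Paraphrases in W2V-type embeddings).** For shifted embeddings
(`Cᵀ w⃗_i = PMI_i − (log k)·𝟙`), the paraphrase identity acquires an additional error term
`(log k)(|W| − 1)·𝟙`. -/
theorem paraphrase_embedding_shifted
    [MeasurableSpace Ω] (μ : Measure Ω) [IsProbabilityMeasure μ]
    {ι : Type*} (A : ι → Set Ω) (Astar : Set Ω) {n : ℕ} (B : Fin n → Set Ω)
    (W : Finset ι)
    (hmA : ∀ i, MeasurableSet (A i)) (hmB : ∀ j, MeasurableSet (B j))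
    (hmAs : MeasurableSet Astar)
    (hA : ∀ i ∈ W, 0 < (μ (A i)).toReal)
    (hB : ∀ j, 0 < (μ (B j)).toReal)
    (hAs : 0 < (μ Astar).toReal)
    (hAW : 0 < (μ (jointEvent A W)).toReal)
    (hAB : ∀ i ∈ W, ∀ j, 0 < (μ (A i ∩ B j)).toReal)
    (hAsB : ∀ j, 0 < (μ (Astar ∩ B j)).toReal)
    (hAWB : ∀ j, 0 < (μ (jointEvent A W ∩ B j)).toReal)
    (k : ℝ) (hk : 0 < k)
    {d : ℕ} (C : Matrix (Fin d) (Fin n) ℝ)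
    (hC : IsUnit (C * C.transpose))
    (wstar : Fin d → ℝ) (wv : ι → Fin d → ℝ)
    (hws : C.transpose.mulVec wstar = fun j => PMI μ Astar (B j) - Real.log k)
    (hwi : ∀ i ∈ W, C.transpose.mulVec (wv i) = fun j => PMI μ (A i) (B j) - Real.log k) :
    wstar = (∑ i ∈ W, wv i)
      + ((C * C.transpose)⁻¹ * C).mulVec
          (fun j => rho μ (jointEvent A W) Astar (B j) + sigma μ A W (B j) - tau μ A W
            + Real.log k * ((W.card : ℝ) - 1)) := by
  have key : (fun j => rho μ (jointEvent A W) Astar (B j) + sigma μ A W (B j) - tau μ A W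
            + Real.log k * ((W.card : ℝ) - 1))
      = C.transpose.mulVec (wstar - ∑ i ∈ W, wv i) := by
    rw [Matrix.mulVec_sub, Matrix.mulVec_sum, hws, Finset.sum_congr rfl hwi]
    funext j
    have hAs' := hAs.ne'
    have hB' := (hB j).ne'
    have hAW' := hAW.ne'
    have hAsB' := (hAsB j).ne'
    have hAWB' := (hAWB j).ne'
    have e1 : rho μ (jointEvent A W) Astar (B j)
        = Real.log (μ (Astar ∩ B j)).toReal - Real.log (μ Astar).toReal
          - (Real.log (μ (jointEvent A W ∩ B j)).toReal
            - Real.log (μ (jointEvent A W)).toReal) := by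
      unfold rho condP
      rw [Real.log_div (div_ne_zero hAsB' hAs') (div_ne_zero hAWB' hAW'),
        Real.log_div hAsB' hAs', Real.log_div hAWB' hAW']
    have hne : ∀ i ∈ W, condP μ (B j) (A i) ≠ 0 := by
      intro i hi
      unfold condP
      rw [Set.inter_comm]
      exact div_ne_zero (hAB i hi j).ne' hB'
    have e2 : sigma μ A W (B j)
        = Real.log (μ (jointEvent A W ∩ B j)).toReal - Real.log (μ (B j)).toReal
          - ∑ i ∈ W, (Real.log (μ (A i ∩ B j)).toReal - Real.log (μ (B j)).toReal) := by
      have h1 : condP μ (B j) (jointEvent A W) ≠ 0 := by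
        unfold condP
        rw [Set.inter_comm]
        exact div_ne_zero hAWB' hB'
      unfold sigma
      rw [Real.log_div h1 (Finset.prod_ne_zero_iff.mpr hne), Real.log_prod hne]
      congr 1
      · unfold condP
        rw [Set.inter_comm, Real.log_div hAWB' hB']
      · refine Finset.sum_congr rfl fun i hi => ?_
        unfold condP
        rw [Set.inter_comm, Real.log_div (hAB i hi j).ne' hB']
    have e3 : tau μ A W
        = Real.log (μ (jointEvent A W)).toReal - ∑ i ∈ W, Real.log (μ (A i)).toReal := by
      have h2 : ∀ i ∈ W, (μ (A i)).toReal ≠ 0 := fun i hi => (hA i hi).ne'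
      unfold tau
      rw [Real.log_div hAW' (Finset.prod_ne_zero_iff.mpr h2), Real.log_prod h2]
    have e4 : PMI μ Astar (B j) = Real.log (μ (Astar ∩ B j)).toReal
        - (Real.log (μ Astar).toReal + Real.log (μ (B j)).toReal) := by
      unfold PMI
      rw [Real.log_div hAsB' (mul_ne_zero hAs' hB'), Real.log_mul hAs' hB']
    have e5 : ∑ i ∈ W, PMI μ (A i) (B j) = ∑ i ∈ W, (Real.log (μ (A i ∩ B j)).toReal
        - (Real.log (μ (A i)).toReal + Real.log (μ (B j)).toReal)) := by
      refine Finset.sum_congr rfl fun i hi => ?_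
      unfold PMI
      rw [Real.log_div (hAB i hi j).ne' (mul_ne_zero (hA i hi).ne' hB'),
        Real.log_mul (hA i hi).ne' hB']
    simp only [Pi.sub_apply, Finset.sum_apply]
    rw [Finset.sum_sub_distrib, e1, e2, e3, e4, e5]
    simp only [Finset.sum_sub_distrib, Finset.sum_add_distrib, Finset.sum_const, nsmul_eq_mul]
    ring
  rw [key, Matrix.mulVec_mulVec, Matrix.mul_assoc,
    Matrix.nonsing_inv_mul _ ((Matrix.isUnit_iff_isUnit_det _).mp hC), Matrix.one_mulVec]
  abel

end AnalogiesExplained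
end

section
/- For any finite word sets W, W_* and every context index j, ∑_{i ∈ W_*} PMI(w_i, c_j) = (∑_{i ∈ W} PMI(w_i, c_j)) + ρ^{W,W_*}_j + σ^W_j − σ^{W_*}_j − (τ^W − τ^{W_*}). (Paper's Lemma 2: generalised paraphrase identity between the summed PMI columns of two word sets.) -/
open MeasureTheory Real Finset Matrix

namespace AnalogiesExplained

variable {Ω : Type*}

/-- Single-set identity: the summed PMI equals `log p(B ∣ A_W) - log p(B) - σ + τ`. -/
theorem sum_PMI_eq [MeasurableSpace Ω] (μ : Measure Ω) {ι : Type*} (A : ι → Set Ω) (B : Set Ω)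
    (W : Finset ι)
    (hA : ∀ i ∈ W, 0 < (μ (A i)).toReal)
    (hB : 0 < (μ B).toReal)
    (hAW : 0 < (μ (jointEvent A W)).toReal)
    (hAB : ∀ i ∈ W, 0 < (μ (A i ∩ B)).toReal)
    (hAWB : 0 < (μ (jointEvent A W ∩ B)).toReal) :
    ∑ i ∈ W, PMI μ (A i) B =
      Real.log (condP μ (jointEvent A W) B) - Real.log (μ B).toReal
        - sigma μ A W B + tau μ A W := by
  have hc : ∀ i ∈ W, condP μ B (A i) ≠ 0 := by
    intro i hi
    unfold condP
    rw [Set.inter_comm]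
    exact (div_pos (hAB i hi) hB).ne'
  have hcW : condP μ B (jointEvent A W) ≠ 0 := by
    unfold condP
    rw [Set.inter_comm]
    exact (div_pos hAWB hB).ne'
  have hA' : ∀ i ∈ W, (μ (A i)).toReal ≠ 0 := fun i hi => (hA i hi).ne'
  have hP : ∀ i ∈ W, PMI μ (A i) B =
      Real.log (condP μ B (A i)) - Real.log (μ (A i)).toReal := by
    intro i hi
    rw [← Real.log_div (hc i hi) (hA' i hi)]
    unfold PMI condP
    rw [Set.inter_comm B, div_div, mul_comm]
  rw [Finset.sum_congr rfl hP, Finset.sum_sub_distrib]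
  unfold sigma tau
  rw [Real.log_div hcW (Finset.prod_ne_zero_iff.mpr hc),
    Real.log_div hAW.ne' (Finset.prod_ne_zero_iff.mpr hA'),
    Real.log_prod hc, Real.log_prod hA']
  unfold condP
  rw [Set.inter_comm B (jointEvent A W), Real.log_div hAWB.ne' hAW.ne',
    Real.log_div hAWB.ne' hB.ne']
  ring

/-- **Lemma 2 (Generalised paraphrase identity at the PMI level).** For any finite word sets
`W, W_*` and every context index `j`:
`∑_{i∈W_*} PMI(w_i,c_j) = (∑_{i∈W} PMI(w_i,c_j)) + ρ^{W,W_*}_j + σ^W_j − σ^{W_*}_j − (τ^W − τ^{W_*})`. -/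
theorem pmi_generalised_paraphrase_identity
    [MeasurableSpace Ω] (μ : Measure Ω) [IsProbabilityMeasure μ]
    {ι : Type*} [DecidableEq ι] (A : ι → Set Ω) {n : ℕ} (B : Fin n → Set Ω)
    (W Wstar : Finset ι)
    (hmA : ∀ i, MeasurableSet (A i)) (hmB : ∀ j, MeasurableSet (B j))
    (hA : ∀ i ∈ W ∪ Wstar, 0 < (μ (A i)).toReal)
    (hB : ∀ j, 0 < (μ (B j)).toReal)
    (hAW : 0 < (μ (jointEvent A W)).toReal)
    (hAWs : 0 < (μ (jointEvent A Wstar)).toReal)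
    (hAB : ∀ i ∈ W ∪ Wstar, ∀ j, 0 < (μ (A i ∩ B j)).toReal)
    (hAWB : ∀ j, 0 < (μ (jointEvent A W ∩ B j)).toReal)
    (hAWsB : ∀ j, 0 < (μ (jointEvent A Wstar ∩ B j)).toReal) :
    ∀ j, (∑ i ∈ Wstar, PMI μ (A i) (B j)) =
      (∑ i ∈ W, PMI μ (A i) (B j))
        + rho μ (jointEvent A W) (jointEvent A Wstar) (B j)
        + sigma μ A W (B j) - sigma μ A Wstar (B j)
        - (tau μ A W - tau μ A Wstar) := by
  intro j
  rw [sum_PMI_eq μ A (B j) W (fun i hi => hA i (Finset.mem_union_left _ hi)) (hB j) hAW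
      (fun i hi => hAB i (Finset.mem_union_left _ hi) j) (hAWB j),
    sum_PMI_eq μ A (B j) Wstar (fun i hi => hA i (Finset.mem_union_right _ hi)) (hB j) hAWs
      (fun i hi => hAB i (Finset.mem_union_right _ hi) j) (hAWsB j)]
  have h1 : condP μ (jointEvent A W) (B j) ≠ 0 := (div_pos (hAWB j) hAW).ne'
  have h2 : condP μ (jointEvent A Wstar) (B j) ≠ 0 := (div_pos (hAWsB j) hAWs).ne'
  unfold rho
  rw [Real.log_div h2 h1]
  ring

end AnalogiesExplained
end

section
/- Let w_x, w_{x*} be words and W⁺, W⁻ finite word sets with w_x ∉ W⁺ and w_{x*} ∉ W⁻, and set W := {w_x} ∪ W⁺ and W_* := {w_{x*}} ∪ W⁻. Then for every context index j: PMI(w_{x*}, c_j) = PMI(w_x, c_j) + ∑_{i∈W⁺} PMI(w_i, c_j) − ∑_{i∈W⁻} PMI(w_i, c_j) + ρ^{W,W_*}_j + σ^W_j − σ^{W_*}_j − (τ^W − τ^{W_*}). (PMI-level form of the paper's Corollary 5: word transformation identity, proved in Appendix D.) -/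
open MeasureTheory Real Finset Matrix

namespace AnalogiesExplained

variable {Ω : Type*}

/-- For a word set `W`, the PMI of the joint event is the sum of PMIs plus `σ - τ`. -/
theorem sum_PMI_add_sigma_sub_tau
    [MeasurableSpace Ω] (μ : Measure Ω) {ι : Type*} (A : ι → Set Ω) (B : Set Ω) (W : Finset ι)
    (hA : ∀ i ∈ W, 0 < (μ (A i)).toReal) (hB : 0 < (μ B).toReal)
    (hAW : 0 < (μ (jointEvent A W)).toReal)
    (hAB : ∀ i ∈ W, 0 < (μ (A i ∩ B)).toReal)
    (hAWB : 0 < (μ (jointEvent A W ∩ B)).toReal) :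
    (∑ i ∈ W, PMI μ (A i) B) + sigma μ A W B - tau μ A W =
      Real.log (μ (jointEvent A W ∩ B)).toReal - Real.log (μ (jointEvent A W)).toReal
        - Real.log (μ B).toReal := by
  have h1 : ∀ i ∈ W, 0 < condP μ B (A i) := by
    intro i hi
    unfold condP
    rw [Set.inter_comm]
    exact div_pos (hAB i hi) hB
  have h2 : ∀ i ∈ W, PMI μ (A i) B
      = Real.log (condP μ B (A i)) - Real.log (μ (A i)).toReal := by
    intro i hi
    unfold PMI condP
    rw [Set.inter_comm B, Real.log_div (hAB i hi).ne' (mul_pos (hA i hi) hB).ne',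
      Real.log_mul (hA i hi).ne' hB.ne', Real.log_div (hAB i hi).ne' hB.ne']
    ring
  have h3 : condP μ B (jointEvent A W) = (μ (jointEvent A W ∩ B)).toReal / (μ B).toReal := by
    unfold condP
    rw [Set.inter_comm]
  unfold sigma tau
  rw [Finset.sum_congr rfl h2, Finset.sum_sub_distrib, h3,
    Real.log_div (div_pos hAWB hB).ne' (Finset.prod_pos h1).ne',
    Real.log_div hAWB.ne' hB.ne', Real.log_div hAW.ne' (Finset.prod_pos hA).ne',
    Real.log_prod (fun i hi => (h1 i hi).ne'), Real.log_prod (fun i hi => (hA i hi).ne')]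
  ring

/-- **Word transformation identity at the PMI level (Corollary 5, Appendix D).**
With `W = {w_x} ∪ W⁺` and `W_* = {w_{x*}} ∪ W⁻`:
`PMI(w_{x*},c_j) = PMI(w_x,c_j) + ∑_{i∈W⁺} PMI(w_i,c_j) − ∑_{i∈W⁻} PMI(w_i,c_j)
  + ρ^{W,W_*}_j + σ^W_j − σ^{W_*}_j − (τ^W − τ^{W_*})`. -/
theorem pmi_word_transformation_identity
    [MeasurableSpace Ω] (μ : Measure Ω) [IsProbabilityMeasure μ]
    {ι : Type*} [DecidableEq ι] (A : ι → Set Ω) {n : ℕ} (B : Fin n → Set Ω)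
    (x xstar : ι) (Wp Wm : Finset ι)
    (hx : x ∉ Wp) (hxs : xstar ∉ Wm)
    (hmA : ∀ i, MeasurableSet (A i)) (hmB : ∀ j, MeasurableSet (B j))
    (hA : ∀ i ∈ insert x Wp ∪ insert xstar Wm, 0 < (μ (A i)).toReal)
    (hB : ∀ j, 0 < (μ (B j)).toReal)
    (hAW : 0 < (μ (jointEvent A (insert x Wp))).toReal)
    (hAWs : 0 < (μ (jointEvent A (insert xstar Wm))).toReal)
    (hAB : ∀ i ∈ insert x Wp ∪ insert xstar Wm, ∀ j, 0 < (μ (A i ∩ B j)).toReal)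
    (hAWB : ∀ j, 0 < (μ (jointEvent A (insert x Wp) ∩ B j)).toReal)
    (hAWsB : ∀ j, 0 < (μ (jointEvent A (insert xstar Wm) ∩ B j)).toReal) :
    ∀ j, PMI μ (A xstar) (B j) =
      PMI μ (A x) (B j)
        + (∑ i ∈ Wp, PMI μ (A i) (B j)) - (∑ i ∈ Wm, PMI μ (A i) (B j))
        + rho μ (jointEvent A (insert x Wp)) (jointEvent A (insert xstar Wm)) (B j)
        + sigma μ A (insert x Wp) (B j) - sigma μ A (insert xstar Wm) (B j)
        - (tau μ A (insert x Wp) - tau μ A (insert xstar Wm)) := by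
  intro j
  have e1 := sum_PMI_add_sigma_sub_tau μ A (B j) (insert x Wp)
    (fun i hi => hA i (Finset.mem_union_left _ hi)) (hB j) hAW
    (fun i hi => hAB i (Finset.mem_union_left _ hi) j) (hAWB j)
  have e2 := sum_PMI_add_sigma_sub_tau μ A (B j) (insert xstar Wm)
    (fun i hi => hA i (Finset.mem_union_right _ hi)) (hB j) hAWs
    (fun i hi => hAB i (Finset.mem_union_right _ hi) j) (hAWsB j)
  rw [Finset.sum_insert hx] at e1
  rw [Finset.sum_insert hxs] at e2
  have e3 : rho μ (jointEvent A (insert x Wp)) (jointEvent A (insert xstar Wm)) (B j) =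
      (Real.log (μ (jointEvent A (insert xstar Wm) ∩ B j)).toReal
        - Real.log (μ (jointEvent A (insert xstar Wm))).toReal)
      - (Real.log (μ (jointEvent A (insert x Wp) ∩ B j)).toReal
        - Real.log (μ (jointEvent A (insert x Wp))).toReal) := by
    unfold rho condP
    rw [Real.log_div (div_pos (hAWsB j) hAWs).ne' (div_pos (hAWB j) hAW).ne',
      Real.log_div (hAWsB j).ne' hAWs.ne', Real.log_div (hAWB j).ne' hAW.ne']
  linarith

end AnalogiesExplained
end

section
/- Let w_a, w_{a*}, w_b, w_{b*} be words and W⁺, W⁻ finite word sets with w_a, w_b ∉ W⁺ and w_{a*}, w_{b*} ∉ W⁻; for x ∈ {a, b} set W^x := {w_x} ∪ W⁺ and W^x_* := {w_{x*}} ∪ W⁻. Then for every context index j: PMI(w_{b*}, c_j) = PMI(w_{a*}, c_j) − PMI(w_a, c_j) + PMI(w_b, c_j) + (ρ^{W^b,W^b_*}_j − ρ^{W^a,W^a_*}_j) + (σ^{W^b}_j − σ^{W^b_*}_j) − (σ^{W^a}_j − σ^{W^a_*}_j) − ((τ^{W^b} − τ^{W^b_*}) − (τ^{W^a} − τ^{W^a_*})).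 (Paper's Lemma 3: the PMI-level analogy identity.) -/
open MeasureTheory Real Finset Matrix

namespace AnalogiesExplained

variable {Ω : Type*}

theorem log_condP_insert [MeasurableSpace Ω] (μ : Measure Ω)
    {ι : Type*} [DecidableEq ι] (A : ι → Set Ω) (B : Set Ω) (x : ι) (V : Finset ι) (hx : x ∉ V)
    (hA : ∀ i ∈ insert x V, 0 < (μ (A i)).toReal)
    (hB : 0 < (μ B).toReal)
    (hW : 0 < (μ (jointEvent A (insert x V))).toReal)
    (hAB : ∀ i ∈ insert x V, 0 < (μ (A i ∩ B)).toReal)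
    (hWB : 0 < (μ (jointEvent A (insert x V) ∩ B)).toReal) :
    Real.log (condP μ (jointEvent A (insert x V)) B) =
      Real.log (μ B).toReal + sigma μ A (insert x V) B - tau μ A (insert x V)
        + PMI μ (A x) B + ∑ i ∈ V, PMI μ (A i) B := by
  have hc : ∀ i ∈ insert x V, 0 < condP μ B (A i) := by
    intro i hi
    unfold condP
    rw [Set.inter_comm]
    exact div_pos (hAB i hi) hB
  have hP : ∀ i ∈ insert x V,
      PMI μ (A i) B = Real.log (condP μ B (A i)) - Real.log (μ (A i)).toReal := by
    intro i hi
    unfold PMI condP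
    rw [Set.inter_comm B (A i), Real.log_div (hAB i hi).ne' (mul_pos (hA i hi) hB).ne',
      Real.log_mul (hA i hi).ne' hB.ne', Real.log_div (hAB i hi).ne' hB.ne']
    ring
  have hs : PMI μ (A x) B + ∑ i ∈ V, PMI μ (A i) B =
      ∑ i ∈ insert x V, Real.log (condP μ B (A i))
        - ∑ i ∈ insert x V, Real.log (μ (A i)).toReal := by
    rw [← Finset.sum_insert (f := fun i => PMI μ (A i) B) hx, Finset.sum_congr rfl hP,
      Finset.sum_sub_distrib]
  have hcW : condP μ B (jointEvent A (insert x V)) ≠ 0 := by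
    unfold condP
    rw [Set.inter_comm]
    exact (div_pos hWB hB).ne'
  rw [add_assoc, hs]
  unfold sigma tau
  rw [Real.log_div hcW (Finset.prod_pos hc).ne', Real.log_div hW.ne' (Finset.prod_pos hA).ne',
    Real.log_prod (fun i hi => (hc i hi).ne'), Real.log_prod (fun i hi => (hA i hi).ne')]
  have h1 : Real.log (condP μ B (jointEvent A (insert x V))) =
      Real.log (μ (jointEvent A (insert x V) ∩ B)).toReal - Real.log (μ B).toReal := by
    unfold condP
    rw [Set.inter_comm, Real.log_div hWB.ne' hB.ne']
  have h2 : Real.log (condP μ (jointEvent A (insert x V)) B) =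
      Real.log (μ (jointEvent A (insert x V) ∩ B)).toReal
        - Real.log (μ (jointEvent A (insert x V))).toReal := by
    unfold condP
    rw [Real.log_div hWB.ne' hW.ne']
  rw [h1, h2]
  ring

/-- **Lemma 3 (Analogy identity at the PMI level).** With `W^x = {w_x} ∪ W⁺` and
`W^x_* = {w_{x*}} ∪ W⁻` for `x ∈ {a, b}`, for every context index `j`:
`PMI(w_{b*},c_j) = PMI(w_{a*},c_j) − PMI(w_a,c_j) + PMI(w_b,c_j)
 + (ρ^{W^b,W^b_*}_j − ρ^{W^a,W^a_*}_j) + (σ^{W^b}_j − σ^{W^b_*}_j) − (σ^{W^a}_j − σ^{W^a_*}_j)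
 − ((τ^{W^b} − τ^{W^b_*}) − (τ^{W^a} − τ^{W^a_*}))`. -/
theorem pmi_analogy_identity
    [MeasurableSpace Ω] (μ : Measure Ω) [IsProbabilityMeasure μ]
    {ι : Type*} [DecidableEq ι] (A : ι → Set Ω) {n : ℕ} (B : Fin n → Set Ω)
    (a astar b bstar : ι) (Wp Wm : Finset ι)
    (ha : a ∉ Wp) (hb : b ∉ Wp) (has : astar ∉ Wm) (hbs : bstar ∉ Wm)
    (hmA : ∀ i, MeasurableSet (A i)) (hmB : ∀ j, MeasurableSet (B j))
    (hA : ∀ i ∈ insert a (insert b Wp) ∪ insert astar (insert bstar Wm),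
      0 < (μ (A i)).toReal)
    (hB : ∀ j, 0 < (μ (B j)).toReal)
    (hAWa : 0 < (μ (jointEvent A (insert a Wp))).toReal)
    (hAWb : 0 < (μ (jointEvent A (insert b Wp))).toReal)
    (hAWas : 0 < (μ (jointEvent A (insert astar Wm))).toReal)
    (hAWbs : 0 < (μ (jointEvent A (insert bstar Wm))).toReal)
    (hAB : ∀ i ∈ insert a (insert b Wp) ∪ insert astar (insert bstar Wm),
      ∀ j, 0 < (μ (A i ∩ B j)).toReal)
    (hAWaB : ∀ j, 0 < (μ (jointEvent A (insert a Wp) ∩ B j)).toReal)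
    (hAWbB : ∀ j, 0 < (μ (jointEvent A (insert b Wp) ∩ B j)).toReal)
    (hAWasB : ∀ j, 0 < (μ (jointEvent A (insert astar Wm) ∩ B j)).toReal)
    (hAWbsB : ∀ j, 0 < (μ (jointEvent A (insert bstar Wm) ∩ B j)).toReal) :
    ∀ j, PMI μ (A bstar) (B j) =
      PMI μ (A astar) (B j) - PMI μ (A a) (B j) + PMI μ (A b) (B j)
        + (rho μ (jointEvent A (insert b Wp)) (jointEvent A (insert bstar Wm)) (B j)
            - rho μ (jointEvent A (insert a Wp)) (jointEvent A (insert astar Wm)) (B j))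
        + (sigma μ A (insert b Wp) (B j) - sigma μ A (insert bstar Wm) (B j))
        - (sigma μ A (insert a Wp) (B j) - sigma μ A (insert astar Wm) (B j))
        - ((tau μ A (insert b Wp) - tau μ A (insert bstar Wm))
            - (tau μ A (insert a Wp) - tau μ A (insert astar Wm))) := by
  intro j
  have la := log_condP_insert μ A (B j) a Wp ha (fun i hi => hA i (by grind)) (hB j) hAWa
    (fun i hi => hAB i (by grind) j) (hAWaB j)
  have lb := log_condP_insert μ A (B j) b Wp hb (fun i hi => hA i (by grind)) (hB j) hAWb
    (fun i hi => hAB i (by grind) j) (hAWbB j)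
  have las := log_condP_insert μ A (B j) astar Wm has (fun i hi => hA i (by grind)) (hB j) hAWas
    (fun i hi => hAB i (by grind) j) (hAWasB j)
  have lbs := log_condP_insert μ A (B j) bstar Wm hbs (fun i hi => hA i (by grind)) (hB j) hAWbs
    (fun i hi => hAB i (by grind) j) (hAWbsB j)
  have pos : ∀ S : Set Ω, 0 < (μ S).toReal → 0 < (μ (S ∩ B j)).toReal → condP μ S (B j) ≠ 0 :=
    fun S h1 h2 => (div_pos h2 h1).ne'
  unfold rho
  rw [Real.log_div (pos _ hAWbs (hAWbsB j)) (pos _ hAWb (hAWbB j)),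
    Real.log_div (pos _ hAWas (hAWasB j)) (pos _ hAWa (hAWaB j)), la, lb, las, lbs]
  ring

end AnalogiesExplained
end

section
/- Under the hypotheses of the analogy identity (words w_a, w_{a*}, w_b, w_{b*}; parameter sets W⁺, W⁻ with w_a, w_b ∉ W⁺, w_{a*}, w_{b*} ∉ W⁻; W^x := {w_x} ∪ W⁺ and W^x_* := {w_{x*}} ∪ W⁻ for x ∈ {a,b}), if each of the four words has an embedding with respect to C (Cᵀ.mulVec w⃗_i = PMI_i), then w⃗_{b*} = w⃗_{a*} − w⃗_a + w⃗_b + C†.mulVec( (ρ^{W^b,W^b_*} − ρ^{W^a,W^a_*}) + (σ^{W^b} − σ^{W^b_*}) − (σ^{W^a} − σ^{W^a_*}) − ((τ^{W^b} − τ^{W^b_*}) − (τ^{W^a} − τ^{W^a_*}))·𝟙 ). (Paper's Theorem 3: Analogies.) -/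
open MeasureTheory Real Finset Matrix

namespace AnalogiesExplained

variable {Ω : Type*}

theorem log_condP_aux [MeasurableSpace Ω] (μ : Measure Ω) {ι : Type*} (A : ι → Set Ω)
    (W : Finset ι) (B : Set Ω) (hA : ∀ i ∈ W, 0 < (μ (A i)).toReal)
    (hB : 0 < (μ B).toReal) (hW : 0 < (μ (jointEvent A W)).toReal)
    (hAB : ∀ i ∈ W, 0 < (μ (A i ∩ B)).toReal)
    (hWB : 0 < (μ (jointEvent A W ∩ B)).toReal) :
    Real.log (condP μ (jointEvent A W) B) = Real.log (μ B).toReal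
      + ∑ i ∈ W, PMI μ (A i) B + sigma μ A W B - tau μ A W := by
  have h1 : sigma μ A W B = Real.log (μ (jointEvent A W ∩ B)).toReal - Real.log (μ B).toReal
      - ∑ i ∈ W, (Real.log (μ (A i ∩ B)).toReal - Real.log (μ B).toReal) := by
    unfold sigma condP
    have hne : ∀ i ∈ W, (μ (B ∩ A i)).toReal / (μ B).toReal ≠ 0 := fun i hi => by
      rw [Set.inter_comm]
      exact (div_pos (hAB i hi) hB).ne'
    rw [Set.inter_comm B, Real.log_div (div_pos hWB hB).ne' (Finset.prod_ne_zero_iff.2 hne),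
      Real.log_div hWB.ne' hB.ne', Real.log_prod hne]
    congr 1
    refine Finset.sum_congr rfl fun i hi => ?_
    rw [Set.inter_comm, Real.log_div (hAB i hi).ne' hB.ne']
  have h2 : tau μ A W = Real.log (μ (jointEvent A W)).toReal
      - ∑ i ∈ W, Real.log (μ (A i)).toReal := by
    unfold tau
    have hne : ∀ i ∈ W, (μ (A i)).toReal ≠ 0 := fun i hi => (hA i hi).ne'
    rw [Real.log_div hW.ne' (Finset.prod_ne_zero_iff.2 hne), Real.log_prod hne]
  have h3 : ∑ i ∈ W, PMI μ (A i) B = ∑ i ∈ W, (Real.log (μ (A i ∩ B)).toReal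
      - Real.log (μ B).toReal) - ∑ i ∈ W, Real.log (μ (A i)).toReal := by
    rw [← Finset.sum_sub_distrib]
    refine Finset.sum_congr rfl fun i hi => ?_
    unfold PMI
    rw [Real.log_div (hAB i hi).ne' (mul_pos (hA i hi) hB).ne',
      Real.log_mul (hA i hi).ne' hB.ne']
    ring
  rw [h1, h2, h3]
  unfold condP
  rw [Real.log_div hWB.ne' hW.ne']
  ring

/-- **Theorem 3 (Analogies).** Under the hypotheses of the analogy identity, if each of the four
words has an embedding w.r.t. `C`, then
`w⃗_{b*} = w⃗_{a*} − w⃗_a + w⃗_b + C†((ρ^{W^b,W^b_*} − ρ^{W^a,W^a_*}) + (σ^{W^b} − σ^{W^b_*})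
 − (σ^{W^a} − σ^{W^a_*}) − ((τ^{W^b} − τ^{W^b_*}) − (τ^{W^a} − τ^{W^a_*}))·𝟙)`. -/
theorem analogy_embedding
    [MeasurableSpace Ω] (μ : Measure Ω) [IsProbabilityMeasure μ]
    {ι : Type*} [DecidableEq ι] (A : ι → Set Ω) {n : ℕ} (B : Fin n → Set Ω)
    (a astar b bstar : ι) (Wp Wm : Finset ι)
    (ha : a ∉ Wp) (hb : b ∉ Wp) (has : astar ∉ Wm) (hbs : bstar ∉ Wm)
    (hmA : ∀ i, MeasurableSet (A i)) (hmB : ∀ j, MeasurableSet (B j))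
    (hA : ∀ i ∈ insert a (insert b Wp) ∪ insert astar (insert bstar Wm),
      0 < (μ (A i)).toReal)
    (hB : ∀ j, 0 < (μ (B j)).toReal)
    (hAWa : 0 < (μ (jointEvent A (insert a Wp))).toReal)
    (hAWb : 0 < (μ (jointEvent A (insert b Wp))).toReal)
    (hAWas : 0 < (μ (jointEvent A (insert astar Wm))).toReal)
    (hAWbs : 0 < (μ (jointEvent A (insert bstar Wm))).toReal)
    (hAB : ∀ i ∈ insert a (insert b Wp) ∪ insert astar (insert bstar Wm),
      ∀ j, 0 < (μ (A i ∩ B j)).toReal)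
    (hAWaB : ∀ j, 0 < (μ (jointEvent A (insert a Wp) ∩ B j)).toReal)
    (hAWbB : ∀ j, 0 < (μ (jointEvent A (insert b Wp) ∩ B j)).toReal)
    (hAWasB : ∀ j, 0 < (μ (jointEvent A (insert astar Wm) ∩ B j)).toReal)
    (hAWbsB : ∀ j, 0 < (μ (jointEvent A (insert bstar Wm) ∩ B j)).toReal)
    {d : ℕ} (C : Matrix (Fin d) (Fin n) ℝ)
    (hC : IsUnit (C * C.transpose))
    (wv : ι → Fin d → ℝ)
    (hwa : C.transpose.mulVec (wv a) = fun j => PMI μ (A a) (B j))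
    (hwas : C.transpose.mulVec (wv astar) = fun j => PMI μ (A astar) (B j))
    (hwb : C.transpose.mulVec (wv b) = fun j => PMI μ (A b) (B j))
    (hwbs : C.transpose.mulVec (wv bstar) = fun j => PMI μ (A bstar) (B j)) :
    wv bstar = wv astar - wv a + wv b
      + ((C * C.transpose)⁻¹ * C).mulVec
          (fun j =>
            (rho μ (jointEvent A (insert b Wp)) (jointEvent A (insert bstar Wm)) (B j)
              - rho μ (jointEvent A (insert a Wp)) (jointEvent A (insert astar Wm)) (B j))
            + (sigma μ A (insert b Wp) (B j) - sigma μ A (insert bstar Wm) (B j))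
            - (sigma μ A (insert a Wp) (B j) - sigma μ A (insert astar Wm) (B j))
            - ((tau μ A (insert b Wp) - tau μ A (insert bstar Wm))
                - (tau μ A (insert a Wp) - tau μ A (insert astar Wm)))) := by
  have hdet : IsUnit (C * C.transpose).det := (Matrix.isUnit_iff_isUnit_det _).1 hC
  have hinv : ∀ v : Fin d → ℝ,
      ((C * C.transpose)⁻¹ * C).mulVec (C.transpose.mulVec v) = v := fun v => by
    rw [Matrix.mulVec_mulVec, Matrix.mul_assoc, Matrix.nonsing_inv_mul _ hdet, Matrix.one_mulVec]
  have key : (fun j =>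
            (rho μ (jointEvent A (insert b Wp)) (jointEvent A (insert bstar Wm)) (B j)
              - rho μ (jointEvent A (insert a Wp)) (jointEvent A (insert astar Wm)) (B j))
            + (sigma μ A (insert b Wp) (B j) - sigma μ A (insert bstar Wm) (B j))
            - (sigma μ A (insert a Wp) (B j) - sigma μ A (insert astar Wm) (B j))
            - ((tau μ A (insert b Wp) - tau μ A (insert bstar Wm))
                - (tau μ A (insert a Wp) - tau μ A (insert astar Wm))))
      = C.transpose.mulVec (wv bstar - wv astar + wv a - wv b) := by
    rw [Matrix.mulVec_sub, Matrix.mulVec_add, Matrix.mulVec_sub, hwa, hwb, hwas, hwbs]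
    funext j
    have sa : insert a Wp ⊆ insert a (insert b Wp) ∪ insert astar (insert bstar Wm) := by
      intro i; simp only [Finset.mem_union, Finset.mem_insert]; tauto
    have sb : insert b Wp ⊆ insert a (insert b Wp) ∪ insert astar (insert bstar Wm) := by
      intro i; simp only [Finset.mem_union, Finset.mem_insert]; tauto
    have sas : insert astar Wm ⊆ insert a (insert b Wp) ∪ insert astar (insert bstar Wm) := by
      intro i; simp only [Finset.mem_union, Finset.mem_insert]; tauto
    have sbs : insert bstar Wm ⊆ insert a (insert b Wp) ∪ insert astar (insert bstar Wm) := by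
      intro i; simp only [Finset.mem_union, Finset.mem_insert]; tauto
    have ea := log_condP_aux μ A _ (B j) (fun i hi => hA i (sa hi)) (hB j) hAWa
      (fun i hi => hAB i (sa hi) j) (hAWaB j)
    have eb := log_condP_aux μ A _ (B j) (fun i hi => hA i (sb hi)) (hB j) hAWb
      (fun i hi => hAB i (sb hi) j) (hAWbB j)
    have eas := log_condP_aux μ A _ (B j) (fun i hi => hA i (sas hi)) (hB j) hAWas
      (fun i hi => hAB i (sas hi) j) (hAWasB j)
    have ebs := log_condP_aux μ A _ (B j) (fun i hi => hA i (sbs hi)) (hB j) hAWbs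
      (fun i hi => hAB i (sbs hi) j) (hAWbsB j)
    have pa : condP μ (jointEvent A (insert a Wp)) (B j) ≠ 0 := (div_pos (hAWaB j) hAWa).ne'
    have pb : condP μ (jointEvent A (insert b Wp)) (B j) ≠ 0 := (div_pos (hAWbB j) hAWb).ne'
    have pas : condP μ (jointEvent A (insert astar Wm)) (B j) ≠ 0 :=
      (div_pos (hAWasB j) hAWas).ne'
    have pbs : condP μ (jointEvent A (insert bstar Wm)) (B j) ≠ 0 :=
      (div_pos (hAWbsB j) hAWbs).ne'
    rw [Finset.sum_insert ha] at ea
    rw [Finset.sum_insert hb] at eb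
    rw [Finset.sum_insert has] at eas
    rw [Finset.sum_insert hbs] at ebs
    unfold rho
    rw [Real.log_div pbs pb, Real.log_div pas pa, ea, eb, eas, ebs]
    simp only [Pi.sub_apply, Pi.add_apply]
    ring
  rw [key, hinv]
  abel

end AnalogiesExplained
end

section
/- Let w_a, w_{a*}, w_b, w_{b*} be words with w_b ≠ w_{a*} and w_{b*} ≠ w_a, and set W := {w_b, w_{a*}} and W_* := {w_{b*}, w_a}. If each of the four words has an embedding with respect to C (Cᵀ.mulVec w⃗_i = PMI_i), then w⃗_{b*} = w⃗_{a*} − w⃗_a + w⃗_b + C†.mulVec( ρ^{W,W_*} + σ^W − σ^{W_*} − (τ^W − τ^{W_*})·𝟙 ). (Paper's Corollary 9: the analogy identity with the canonical transformation parameters W⁺ = {w_{a*}}, W⁻ = {w_a}.) -/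
open MeasureTheory Real Finset Matrix

namespace AnalogiesExplained

variable {Ω : Type*}

/-- **Corollary 9.** The analogy identity with the canonical transformation parameters
`W⁺ = {w_{a*}}`, `W⁻ = {w_a}`, i.e. `W = {w_b, w_{a*}}` and `W_* = {w_{b*}, w_a}`:
`w⃗_{b*} = w⃗_{a*} − w⃗_a + w⃗_b + C†(ρ^{W,W_*} + σ^W − σ^{W_*} − (τ^W − τ^{W_*})·𝟙)`. -/
theorem analogy_embedding_canonical
    [MeasurableSpace Ω] (μ : Measure Ω) [IsProbabilityMeasure μ]
    {ι : Type*} [DecidableEq ι] (A : ι → Set Ω) {n : ℕ} (B : Fin n → Set Ω)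
    (a astar b bstar : ι)
    (hbas : b ≠ astar) (hbsa : bstar ≠ a)
    (hmA : ∀ i, MeasurableSet (A i)) (hmB : ∀ j, MeasurableSet (B j))
    (hA : ∀ i ∈ ({b, astar, bstar, a} : Finset ι), 0 < (μ (A i)).toReal)
    (hB : ∀ j, 0 < (μ (B j)).toReal)
    (hAW : 0 < (μ (jointEvent A {b, astar})).toReal)
    (hAWs : 0 < (μ (jointEvent A {bstar, a})).toReal)
    (hAB : ∀ i ∈ ({b, astar, bstar, a} : Finset ι), ∀ j, 0 < (μ (A i ∩ B j)).toReal)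
    (hAWB : ∀ j, 0 < (μ (jointEvent A {b, astar} ∩ B j)).toReal)
    (hAWsB : ∀ j, 0 < (μ (jointEvent A {bstar, a} ∩ B j)).toReal)
    {d : ℕ} (C : Matrix (Fin d) (Fin n) ℝ)
    (hC : IsUnit (C * C.transpose))
    (wv : ι → Fin d → ℝ)
    (hwa : C.transpose.mulVec (wv a) = fun j => PMI μ (A a) (B j))
    (hwas : C.transpose.mulVec (wv astar) = fun j => PMI μ (A astar) (B j))
    (hwb : C.transpose.mulVec (wv b) = fun j => PMI μ (A b) (B j))
    (hwbs : C.transpose.mulVec (wv bstar) = fun j => PMI μ (A bstar) (B j)) :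
    wv bstar = wv astar - wv a + wv b
      + ((C * C.transpose)⁻¹ * C).mulVec
          (fun j => rho μ (jointEvent A {b, astar}) (jointEvent A {bstar, a}) (B j)
            + sigma μ A {b, astar} (B j) - sigma μ A {bstar, a} (B j)
            - (tau μ A {b, astar} - tau μ A {bstar, a})) := by
  have key : (fun j => rho μ (jointEvent A {b, astar}) (jointEvent A {bstar, a}) (B j)
            + sigma μ A {b, astar} (B j) - sigma μ A {bstar, a} (B j)
            - (tau μ A {b, astar} - tau μ A {bstar, a}))
      = C.transpose.mulVec (wv bstar - wv astar + wv a - wv b) := by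
    rw [Matrix.mulVec_sub, Matrix.mulVec_add, Matrix.mulVec_sub, hwa, hwas, hwb, hwbs]
    funext j
    have h1 := (hA a (by simp)).ne'
    have h2 := (hA b (by simp)).ne'
    have h3 := (hA astar (by simp)).ne'
    have h4 := (hA bstar (by simp)).ne'
    have k1 := (hAB a (by simp) j).ne'
    have k2 := (hAB b (by simp) j).ne'
    have k3 := (hAB astar (by simp) j).ne'
    have k4 := (hAB bstar (by simp) j).ne'
    have hb := (hB j).ne'
    have w1 := hAW.ne'
    have w2 := hAWs.ne'
    have w3 := (hAWB j).ne'
    have w4 := (hAWsB j).ne'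
    simp only [Pi.sub_apply, Pi.add_apply, rho, sigma, tau, PMI, condP,
      Finset.prod_pair hbas, Finset.prod_pair hbsa, Set.inter_comm (B j)]
    generalize (μ (jointEvent A {b, astar} ∩ B j)).toReal = x1 at *
    generalize (μ (jointEvent A {bstar, a} ∩ B j)).toReal = x2 at *
    generalize (μ (jointEvent A {b, astar})).toReal = x3 at *
    generalize (μ (jointEvent A {bstar, a})).toReal = x4 at *
    simp only [Real.log_div, Real.log_mul, ne_eq, div_eq_zero_iff, mul_eq_zero, h1, h2, h3, h4,
      k1, k2, k3, k4, hb, w1, w2, w3, w4, or_self, not_false_eq_true]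
    ring
  rw [key, Matrix.mulVec_mulVec, Matrix.mul_assoc,
    Matrix.nonsing_inv_mul _ ((Matrix.isUnit_iff_isUnit_det _).1 hC), Matrix.one_mulVec]
  abel

end AnalogiesExplained
end

section
/- Let k > 0, let w_a, w_{a*}, w_b, w_{b*} be words with w_b ≠ w_{a*} and w_{b*} ≠ w_a, and set W := {w_b, w_{a*}}, W_* := {w_{b*}, w_a}. If each of the four words has a shifted embedding with respect to C, i.e. Cᵀ.mulVec w⃗_i = PMI_i − (log k)·𝟙, then the shift cancels and the same analogy identity holds: w⃗_{b*} = w⃗_{a*} − w⃗_a + w⃗_b + C†.mulVec( ρ^{W,W_*} + σ^W − σ^{W_*} − (τ^W − τ^{W_*})·𝟙 ). (Paper's Corollary 11: the analogy identity holds unchanged for word2vec-type embeddings factorising the shifted PMI matrix.) -/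
open MeasureTheory Real Finset Matrix

namespace AnalogiesExplained

variable {Ω : Type*}

/-- **Corollary 11.** For shifted (word2vec-type) embeddings `Cᵀ w⃗_i = PMI_i − (log k)·𝟙`,
the shift cancels and the analogy identity with canonical parameters holds unchanged:
`w⃗_{b*} = w⃗_{a*} − w⃗_a + w⃗_b + C†(ρ^{W,W_*} + σ^W − σ^{W_*} − (τ^W − τ^{W_*})·𝟙)`,
where `W = {w_b, w_{a*}}` and `W_* = {w_{b*}, w_a}`. -/
theorem analogy_embedding_shifted
    [MeasurableSpace Ω] (μ : Measure Ω) [IsProbabilityMeasure μ]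
    {ι : Type*} [DecidableEq ι] (A : ι → Set Ω) {n : ℕ} (B : Fin n → Set Ω)
    (a astar b bstar : ι)
    (hbas : b ≠ astar) (hbsa : bstar ≠ a)
    (hmA : ∀ i, MeasurableSet (A i)) (hmB : ∀ j, MeasurableSet (B j))
    (hA : ∀ i ∈ ({b, astar, bstar, a} : Finset ι), 0 < (μ (A i)).toReal)
    (hB : ∀ j, 0 < (μ (B j)).toReal)
    (hAW : 0 < (μ (jointEvent A {b, astar})).toReal)
    (hAWs : 0 < (μ (jointEvent A {bstar, a})).toReal)
    (hAB : ∀ i ∈ ({b, astar, bstar, a} : Finset ι), ∀ j, 0 < (μ (A i ∩ B j)).toReal)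
    (hAWB : ∀ j, 0 < (μ (jointEvent A {b, astar} ∩ B j)).toReal)
    (hAWsB : ∀ j, 0 < (μ (jointEvent A {bstar, a} ∩ B j)).toReal)
    (k : ℝ) (hk : 0 < k)
    {d : ℕ} (C : Matrix (Fin d) (Fin n) ℝ)
    (hC : IsUnit (C * C.transpose))
    (wv : ι → Fin d → ℝ)
    (hwa : C.transpose.mulVec (wv a) = fun j => PMI μ (A a) (B j) - Real.log k)
    (hwas : C.transpose.mulVec (wv astar) = fun j => PMI μ (A astar) (B j) - Real.log k)
    (hwb : C.transpose.mulVec (wv b) = fun j => PMI μ (A b) (B j) - Real.log k)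
    (hwbs : C.transpose.mulVec (wv bstar) = fun j => PMI μ (A bstar) (B j) - Real.log k) :
    wv bstar = wv astar - wv a + wv b
      + ((C * C.transpose)⁻¹ * C).mulVec
          (fun j => rho μ (jointEvent A {b, astar}) (jointEvent A {bstar, a}) (B j)
            + sigma μ A {b, astar} (B j) - sigma μ A {bstar, a} (B j)
            - (tau μ A {b, astar} - tau μ A {bstar, a})) := by
  have hAb := hA b (by simp)
  have hAas := hA astar (by simp)
  have hAbs := hA bstar (by simp)
  have hAa := hA a (by simp)
  have key : (fun j => rho μ (jointEvent A {b, astar}) (jointEvent A {bstar, a}) (B j)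
            + sigma μ A {b, astar} (B j) - sigma μ A {bstar, a} (B j)
            - (tau μ A {b, astar} - tau μ A {bstar, a}))
      = C.transpose.mulVec (wv bstar - wv astar + wv a - wv b) := by
    rw [Matrix.mulVec_sub, Matrix.mulVec_add, Matrix.mulVec_sub, hwa, hwas, hwb, hwbs]
    funext j
    have h1 := (hAB b (by simp) j).ne'
    have h2 := (hAB astar (by simp) j).ne'
    have h3 := (hAB bstar (by simp) j).ne'
    have h4 := (hAB a (by simp) j).ne'
    have h5 := (hB j).ne'
    have h6 := (hAWB j).ne'
    have h7 := (hAWsB j).ne'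
    have e1 := hAb.ne'
    have e2 := hAas.ne'
    have e3 := hAbs.ne'
    have e4 := hAa.ne'
    have e5 := hAW.ne'
    have e6 := hAWs.ne'
    simp only [Pi.sub_apply, Pi.add_apply, rho, sigma, tau, PMI, condP,
      Finset.prod_pair hbas, Finset.prod_pair hbsa, Set.inter_comm (B j)]
    generalize (μ (jointEvent A {b, astar} ∩ B j)).toReal = x1 at *
    generalize (μ (jointEvent A {bstar, a} ∩ B j)).toReal = x2 at *
    generalize (μ (jointEvent A {b, astar})).toReal = x3 at *
    generalize (μ (jointEvent A {bstar, a})).toReal = x4 at *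
    rw [Real.log_div (by positivity) (by positivity), Real.log_div (by positivity) (by positivity),
      Real.log_div (by positivity) (by positivity), Real.log_div (by positivity) (by positivity),
      Real.log_div (by positivity) (by positivity), Real.log_div (by positivity) (by positivity),
      Real.log_div (by positivity) (by positivity), Real.log_div (by positivity) (by positivity),
      Real.log_div (by positivity) (by positivity)]
    simp only [Real.log_mul, Real.log_div, ne_eq, h1, h2, h3, h4, h5, h6, h7, e1, e2, e3, e4,
      e5, e6, not_false_eq_true, div_eq_zero_iff, mul_eq_zero, or_self]
    ring
  rw [key, Matrix.mulVec_mulVec, Matrix.mul_assoc,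
    Matrix.nonsing_inv_mul _ ((Matrix.isUnit_iff_isUnit_det _).mp hC), Matrix.one_mulVec]
  abel

end AnalogiesExplained
end

section
/- Fix words w_a, w_{a*}, w_b, w_{b*}. For any finite parameter sets W⁺ (with w_a, w_b ∉ W⁺) and W⁻ (with w_{a*}, w_{b*} ∉ W⁻), writing W^x := {w_x} ∪ W⁺ and W^x_* := {w_{x*}} ∪ W⁻ for x ∈ {a,b}, the total error (ρ^{W^b,W^b_*}_j − ρ^{W^a,W^a_*}_j) + (σ^{W^b}_j − σ^{W^b_*}_j) − (σ^{W^a}_j − σ^{W^a_*}_j) − ((τ^{W^b} − τ^{W^b_*}) − (τ^{W^a} − τ^{W^a_*})) equals PMI(w_{b*}, c_j) − PMI(w_{a*}, c_j) + PMI(w_a, c_j) − PMI(w_b, c_j) for every j; in particular this total error is the same for every choice of parameter sets W⁺, W⁻. (Exact form of the paper's Corollary 8: transformation parameter equivalence.) -/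
open MeasureTheory Real Finset Matrix

namespace AnalogiesExplained

variable {Ω : Type*}

/-- Key identity: `σ - τ` in terms of conditional probability and the sum of PMIs. -/
theorem sigma_sub_tau [MeasurableSpace Ω] (μ : Measure Ω) {ι : Type*} (A : ι → Set Ω)
    (W : Finset ι) (B : Set Ω) (hB : 0 < (μ B).toReal)
    (hA : ∀ i ∈ W, 0 < (μ (A i)).toReal) (hAB : ∀ i ∈ W, 0 < (μ (A i ∩ B)).toReal)
    (hW : 0 < (μ (jointEvent A W)).toReal) (hWB : 0 < (μ (jointEvent A W ∩ B)).toReal) :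
    sigma μ A W B - tau μ A W
      = Real.log (condP μ (jointEvent A W) B) - Real.log (μ B).toReal
        - ∑ i ∈ W, PMI μ (A i) B := by
  have hc : ∀ i ∈ W, condP μ B (A i) ≠ 0 := by
    intro i hi
    unfold condP
    rw [Set.inter_comm]
    exact (div_pos (hAB i hi) hB).ne'
  have hP : ∑ i ∈ W, PMI μ (A i) B
      = ∑ i ∈ W, Real.log (condP μ B (A i)) - ∑ i ∈ W, Real.log (μ (A i)).toReal := by
    rw [← Finset.sum_sub_distrib]
    refine Finset.sum_congr rfl fun i hi => ?_
    unfold PMI condP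
    rw [Set.inter_comm B, Real.log_div (hAB i hi).ne' (mul_pos (hA i hi) hB).ne',
      Real.log_mul (hA i hi).ne' hB.ne', Real.log_div (hAB i hi).ne' hB.ne']
    ring
  have hcW : condP μ B (jointEvent A W) ≠ 0 := by
    unfold condP
    rw [Set.inter_comm]
    exact (div_pos hWB hB).ne'
  rw [hP]
  unfold sigma tau
  rw [Real.log_div hcW (Finset.prod_ne_zero_iff.2 hc), Real.log_prod hc,
    Real.log_div hW.ne' (Finset.prod_ne_zero_iff.2 fun i hi => (hA i hi).ne'),
    Real.log_prod fun i hi => (hA i hi).ne']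
  unfold condP
  rw [Set.inter_comm B (jointEvent A W), Real.log_div hWB.ne' hB.ne',
    Real.log_div hWB.ne' hW.ne']
  ring

/-- The paraphrase error as a difference of logarithms. -/
theorem rho_eq [MeasurableSpace Ω] (μ : Measure Ω) (U V B : Set Ω)
    (hU : 0 < (μ U).toReal) (hV : 0 < (μ V).toReal)
    (hUB : 0 < (μ (U ∩ B)).toReal) (hVB : 0 < (μ (V ∩ B)).toReal) :
    rho μ U V B = Real.log (condP μ V B) - Real.log (condP μ U B) := by
  unfold rho
  have h1 := (div_pos hVB hV).ne'
  have h2 := (div_pos hUB hU).ne'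
  exact Real.log_div h1 h2

/-- **Corollary 8 (Transformation parameter equivalence, exact form).** For any parameter sets
`W⁺, W⁻`, the total error of the analogy identity equals
`PMI(w_{b*},c_j) − PMI(w_{a*},c_j) + PMI(w_a,c_j) − PMI(w_b,c_j)` for every `j`; in particular
it is the same for every choice of `W⁺, W⁻`. -/
theorem total_error_parameter_invariant
    [MeasurableSpace Ω] (μ : Measure Ω) [IsProbabilityMeasure μ]
    {ι : Type*} [DecidableEq ι] (A : ι → Set Ω) {n : ℕ} (B : Fin n → Set Ω)
    (a astar b bstar : ι)
    (hmA : ∀ i, MeasurableSet (A i)) (hmB : ∀ j, MeasurableSet (B j))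
    (Wp Wm : Finset ι)
    (ha : a ∉ Wp) (hb : b ∉ Wp) (has : astar ∉ Wm) (hbs : bstar ∉ Wm)
    (hA : ∀ i ∈ insert a (insert b Wp) ∪ insert astar (insert bstar Wm),
      0 < (μ (A i)).toReal)
    (hB : ∀ j, 0 < (μ (B j)).toReal)
    (hAWa : 0 < (μ (jointEvent A (insert a Wp))).toReal)
    (hAWb : 0 < (μ (jointEvent A (insert b Wp))).toReal)
    (hAWas : 0 < (μ (jointEvent A (insert astar Wm))).toReal)
    (hAWbs : 0 < (μ (jointEvent A (insert bstar Wm))).toReal)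
    (hAB : ∀ i ∈ insert a (insert b Wp) ∪ insert astar (insert bstar Wm),
      ∀ j, 0 < (μ (A i ∩ B j)).toReal)
    (hAWaB : ∀ j, 0 < (μ (jointEvent A (insert a Wp) ∩ B j)).toReal)
    (hAWbB : ∀ j, 0 < (μ (jointEvent A (insert b Wp) ∩ B j)).toReal)
    (hAWasB : ∀ j, 0 < (μ (jointEvent A (insert astar Wm) ∩ B j)).toReal)
    (hAWbsB : ∀ j, 0 < (μ (jointEvent A (insert bstar Wm) ∩ B j)).toReal) :
    ∀ j,
      (rho μ (jointEvent A (insert b Wp)) (jointEvent A (insert bstar Wm)) (B j)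
          - rho μ (jointEvent A (insert a Wp)) (jointEvent A (insert astar Wm)) (B j))
        + (sigma μ A (insert b Wp) (B j) - sigma μ A (insert bstar Wm) (B j))
        - (sigma μ A (insert a Wp) (B j) - sigma μ A (insert astar Wm) (B j))
        - ((tau μ A (insert b Wp) - tau μ A (insert bstar Wm))
            - (tau μ A (insert a Wp) - tau μ A (insert astar Wm)))
      = PMI μ (A bstar) (B j) - PMI μ (A astar) (B j)
          + PMI μ (A a) (B j) - PMI μ (A b) (B j) := by
  intro j
  have key : ∀ W : Finset ι,
      W ⊆ insert a (insert b Wp) ∪ insert astar (insert bstar Wm) →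
      0 < (μ (jointEvent A W)).toReal → 0 < (μ (jointEvent A W ∩ B j)).toReal → _ :=
    fun W hW h1 h2 => sigma_sub_tau μ A W (B j) (hB j) (fun i hi => hA i (hW hi))
      (fun i hi => hAB i (hW hi) j) h1 h2
  have ka := key (insert a Wp) (by intro i; simp; tauto) hAWa (hAWaB j)
  have kb := key (insert b Wp) (by intro i; simp; tauto) hAWb (hAWbB j)
  have kas := key (insert astar Wm) (by intro i; simp; tauto) hAWas (hAWasB j)
  have kbs := key (insert bstar Wm) (by intro i; simp; tauto) hAWbs (hAWbsB j)
  rw [Finset.sum_insert ha] at ka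
  rw [Finset.sum_insert hb] at kb
  rw [Finset.sum_insert has] at kas
  rw [Finset.sum_insert hbs] at kbs
  rw [rho_eq μ _ _ _ hAWb hAWbs (hAWbB j) (hAWbsB j),
    rho_eq μ _ _ _ hAWa hAWas (hAWaB j) (hAWasB j)]
  linarith

end AnalogiesExplained
end

section
/- Suppose the context events B_1, …, B_n are pairwise disjoint and their union is Ω. Then the Kullback–Leibler divergence between the distributions over context words induced by the word set W and by the word w_* satisfies Δ := ∑_{j} p(B_j∣A_W) · log( p(B_j∣A_W) / p(B_j∣A_*) ) = ∑_{j} p(B_j∣A_W) · ( ∑_{i∈W} PMI(w_i, c_j) − PMI(w_*, c_j) + σ^W_j ) − τ^W. (PMI-level form of the paper's Theorem 4: Weak paraphrasing.) -/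
open MeasureTheory Real Finset Matrix

namespace AnalogiesExplained

variable {Ω : Type*}

/-- **Theorem 4 at the PMI level (Weak paraphrasing).** If the context events partition `Ω`, the
KL divergence between the distributions induced by `W` and by `w_*` satisfies
`Δ = ∑_j p(B_j∣A_W)·(∑_{i∈W} PMI(w_i,c_j) − PMI(w_*,c_j) + σ^W_j) − τ^W`. -/
theorem weak_paraphrase_pmi
    [MeasurableSpace Ω] (μ : Measure Ω) [IsProbabilityMeasure μ]
    {ι : Type*} (A : ι → Set Ω) (Astar : Set Ω) {n : ℕ} (B : Fin n → Set Ω)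
    (W : Finset ι)
    (hmA : ∀ i, MeasurableSet (A i)) (hmB : ∀ j, MeasurableSet (B j))
    (hmAs : MeasurableSet Astar)
    (hdisj : ∀ j k, j ≠ k → Disjoint (B j) (B k))
    (hcover : (⋃ j, B j) = Set.univ)
    (hA : ∀ i ∈ W, 0 < (μ (A i)).toReal)
    (hB : ∀ j, 0 < (μ (B j)).toReal)
    (hAs : 0 < (μ Astar).toReal)
    (hAW : 0 < (μ (jointEvent A W)).toReal)
    (hAB : ∀ i ∈ W, ∀ j, 0 < (μ (A i ∩ B j)).toReal)
    (hAsB : ∀ j, 0 < (μ (Astar ∩ B j)).toReal)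
    (hAWB : ∀ j, 0 < (μ (jointEvent A W ∩ B j)).toReal) :
    (∑ j, condP μ (jointEvent A W) (B j) *
        Real.log (condP μ (jointEvent A W) (B j) / condP μ Astar (B j)))
      = (∑ j, condP μ (jointEvent A W) (B j) *
          ((∑ i ∈ W, PMI μ (A i) (B j)) - PMI μ Astar (B j) + sigma μ A W (B j)))
        - tau μ A W := by
  have hone : ∑ j, condP μ (jointEvent A W) (B j) = 1 := by
    unfold condP
    rw [← Finset.sum_div, div_eq_one_iff_eq hAW.ne']
    have hmW : MeasurableSet (jointEvent A W) :=
      Finset.measurableSet_biInter W (fun i _ => hmA i)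
    rw [← ENNReal.toReal_sum (fun j _ => measure_ne_top μ _)]
    congr 1
    have hU : jointEvent A W = ⋃ j, (jointEvent A W ∩ B j) := by
      rw [← Set.inter_iUnion, hcover, Set.inter_univ]
    conv_rhs => rw [hU]
    rw [measure_iUnion, tsum_fintype]
    · intro j k hjk
      exact (hdisj j k hjk).mono Set.inter_subset_right Set.inter_subset_right
    · exact fun j => hmW.inter (hmB j)
  have key : ∀ j, Real.log (condP μ (jointEvent A W) (B j) / condP μ Astar (B j))
      = ((∑ i ∈ W, PMI μ (A i) (B j)) - PMI μ Astar (B j) + sigma μ A W (B j))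
        - tau μ A W := by
    intro j
    have hb := (hB j).ne'
    have h1 : ∑ i ∈ W, PMI μ (A i) (B j)
        = ∑ i ∈ W, Real.log (condP μ (B j) (A i)) - ∑ i ∈ W, Real.log (μ (A i)).toReal := by
      rw [← Finset.sum_sub_distrib]
      refine Finset.sum_congr rfl (fun i hi => ?_)
      have ha := (hA i hi).ne'
      have hab := (hAB i hi j).ne'
      unfold PMI condP
      rw [Set.inter_comm (B j), Real.log_div hab (mul_ne_zero ha hb), Real.log_mul ha hb,
        Real.log_div hab hb]
      ring
    have hc : ∀ i ∈ W, condP μ (B j) (A i) ≠ 0 := by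
      intro i hi
      unfold condP
      rw [Set.inter_comm]
      exact (div_pos (hAB i hi j) (hB j)).ne'
    have hcW : condP μ (B j) (jointEvent A W) ≠ 0 := by
      unfold condP
      rw [Set.inter_comm]
      exact (div_pos (hAWB j) (hB j)).ne'
    have h2 : sigma μ A W (B j) = Real.log (condP μ (B j) (jointEvent A W))
        - ∑ i ∈ W, Real.log (condP μ (B j) (A i)) := by
      unfold sigma
      rw [Real.log_div hcW (Finset.prod_ne_zero_iff.mpr hc), Real.log_prod hc]
    have h3 : tau μ A W = Real.log (μ (jointEvent A W)).toReal
        - ∑ i ∈ W, Real.log (μ (A i)).toReal := by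
      unfold tau
      rw [Real.log_div hAW.ne' (Finset.prod_ne_zero_iff.mpr fun i hi => (hA i hi).ne'),
        Real.log_prod fun i hi => (hA i hi).ne']
    rw [h1, h2, h3]
    unfold PMI condP
    rw [Set.inter_comm (B j),
      Real.log_div (div_pos (hAWB j) hAW).ne' (div_pos (hAsB j) hAs).ne',
      Real.log_div (hAWB j).ne' hAW.ne', Real.log_div (hAsB j).ne' hAs.ne',
      Real.log_div (hAsB j).ne' (mul_ne_zero hAs.ne' hb), Real.log_mul hAs.ne' hb,
      Real.log_div (hAWB j).ne' hb]
    simp only [Set.inter_comm (B j)]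
    ring
  simp only [key, mul_sub _ _ (tau μ A W)]
  rw [Finset.sum_sub_distrib, ← Finset.sum_mul, hone, one_mul]

end AnalogiesExplained
end

section
/- Suppose the context events B_1, …, B_n are pairwise disjoint with union Ω, and suppose w_* and each w_i (i ∈ W) have embeddings with respect to C (Cᵀ.mulVec w⃗_i = PMI_i). Let ĉ := ∑_j p(B_j∣A_W) · c_j ∈ ℝ^d, where c_j is the j-th column of C, let Δ := ∑_j p(B_j∣A_W) · log( p(B_j∣A_W) / p(B_j∣A_*) ) be the KL divergence of the induced distributions, and let σ̂ := ∑_j p(B_j∣A_W) · σ^W_j. Then ⟨w⃗_*, ĉ⟩ = ⟨∑_{i∈W} w⃗_i, ĉ⟩ − Δ + σ̂ − τ^W. (Paper's Theorem 4: Weak paraphrasing — the weaker KL relationship confines the embedding w⃗_* only to a hyperplane.) -/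
open MeasureTheory Real Finset Matrix

namespace AnalogiesExplained

variable {Ω : Type*}

/-- **Theorem 4 (Weak paraphrasing).** With `ĉ = ∑_j p(B_j∣A_W)·c_j` (`c_j` the `j`-th column of
`C`), `Δ` the KL divergence of the induced distributions and `σ̂ = ∑_j p(B_j∣A_W)·σ^W_j`:
`⟨w⃗_*, ĉ⟩ = ⟨∑_{i∈W} w⃗_i, ĉ⟩ − Δ + σ̂ − τ^W`. -/
theorem weak_paraphrase_embedding
    [MeasurableSpace Ω] (μ : Measure Ω) [IsProbabilityMeasure μ]
    {ι : Type*} (A : ι → Set Ω) (Astar : Set Ω) {n : ℕ} (B : Fin n → Set Ω)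
    (W : Finset ι)
    (hmA : ∀ i, MeasurableSet (A i)) (hmB : ∀ j, MeasurableSet (B j))
    (hmAs : MeasurableSet Astar)
    (hdisj : ∀ j k, j ≠ k → Disjoint (B j) (B k))
    (hcover : (⋃ j, B j) = Set.univ)
    (hA : ∀ i ∈ W, 0 < (μ (A i)).toReal)
    (hB : ∀ j, 0 < (μ (B j)).toReal)
    (hAs : 0 < (μ Astar).toReal)
    (hAW : 0 < (μ (jointEvent A W)).toReal)
    (hAB : ∀ i ∈ W, ∀ j, 0 < (μ (A i ∩ B j)).toReal)
    (hAsB : ∀ j, 0 < (μ (Astar ∩ B j)).toReal)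
    (hAWB : ∀ j, 0 < (μ (jointEvent A W ∩ B j)).toReal)
    {d : ℕ} (C : Matrix (Fin d) (Fin n) ℝ)
    (wstar : Fin d → ℝ) (wv : ι → Fin d → ℝ)
    (hws : C.transpose.mulVec wstar = fun j => PMI μ Astar (B j))
    (hwi : ∀ i ∈ W, C.transpose.mulVec (wv i) = fun j => PMI μ (A i) (B j)) :
    wstar ⬝ᵥ (∑ j, condP μ (jointEvent A W) (B j) • (fun r => C r j))
      = (∑ i ∈ W, wv i) ⬝ᵥ (∑ j, condP μ (jointEvent A W) (B j) • (fun r => C r j))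
        - (∑ j, condP μ (jointEvent A W) (B j) *
            Real.log (condP μ (jointEvent A W) (B j) / condP μ Astar (B j)))
        + (∑ j, condP μ (jointEvent A W) (B j) * sigma μ A W (B j))
        - tau μ A W := by
  have hdot : ∀ v : Fin d → ℝ,
      v ⬝ᵥ (∑ j, condP μ (jointEvent A W) (B j) • (fun r => C r j))
        = ∑ j, condP μ (jointEvent A W) (B j) * (C.transpose.mulVec v) j := by
    intro v
    rw [dotProduct_sum]
    refine Finset.sum_congr rfl fun j _ => ?_
    rw [dotProduct_smul, smul_eq_mul, dotProduct_comm]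
    rfl
  have hsum1 : ∑ j, condP μ (jointEvent A W) (B j) = 1 := by
    have hmW : MeasurableSet (jointEvent A W) :=
      Finset.measurableSet_biInter W fun i _ => hmA i
    have h1 : μ (jointEvent A W) = ∑ j, μ (jointEvent A W ∩ B j) := by
      rw [← tsum_fintype (L := .unconditional _), ← measure_iUnion, ← Set.inter_iUnion, hcover, Set.inter_univ]
      · intro j k hjk
        exact (hdisj j k hjk).mono Set.inter_subset_right Set.inter_subset_right
      · exact fun j => hmW.inter (hmB j)
    unfold condP
    rw [← Finset.sum_div, ← ENNReal.toReal_sum (fun j _ => measure_ne_top μ _), ← h1]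
    exact div_self hAW.ne'
  have key : ∀ j, PMI μ Astar (B j) = (∑ i ∈ W, PMI μ (A i) (B j))
      - Real.log (condP μ (jointEvent A W) (B j) / condP μ Astar (B j))
      + sigma μ A W (B j) - tau μ A W := by
    intro j
    have hb := (hB j).ne'
    have e1 : ∑ i ∈ W, PMI μ (A i) (B j) = ∑ i ∈ W, (Real.log (μ (A i ∩ B j)).toReal
        - Real.log (μ (A i)).toReal - Real.log (μ (B j)).toReal) := by
      refine Finset.sum_congr rfl fun i hi => ?_
      unfold PMI
      rw [Real.log_div (hAB i hi j).ne' (mul_ne_zero (hA i hi).ne' hb),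
        Real.log_mul (hA i hi).ne' hb]
      ring
    have hc : ∀ i ∈ W, condP μ (B j) (A i) ≠ 0 := by
      intro i hi
      unfold condP
      rw [Set.inter_comm]
      exact div_ne_zero (hAB i hi j).ne' hb
    have e2 : ∑ i ∈ W, Real.log (condP μ (B j) (A i)) =
        ∑ i ∈ W, (Real.log (μ (A i ∩ B j)).toReal - Real.log (μ (B j)).toReal) := by
      refine Finset.sum_congr rfl fun i hi => ?_
      unfold condP
      rw [Set.inter_comm, Real.log_div (hAB i hi j).ne' hb]
    have e3 : sigma μ A W (B j) = Real.log (μ (jointEvent A W ∩ B j)).toReal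
        - Real.log (μ (B j)).toReal
        - ∑ i ∈ W, (Real.log (μ (A i ∩ B j)).toReal - Real.log (μ (B j)).toReal) := by
      have hne : condP μ (B j) (jointEvent A W) ≠ 0 := by
        unfold condP
        rw [Set.inter_comm]
        exact div_ne_zero (hAWB j).ne' hb
      unfold sigma
      rw [Real.log_div hne (Finset.prod_ne_zero_iff.2 hc), Real.log_prod hc, e2]
      unfold condP
      rw [Set.inter_comm, Real.log_div (hAWB j).ne' hb]
    have e4 : tau μ A W = Real.log (μ (jointEvent A W)).toReal
        - ∑ i ∈ W, Real.log (μ (A i)).toReal := by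
      unfold tau
      rw [Real.log_div hAW.ne' (Finset.prod_ne_zero_iff.2 fun i hi => (hA i hi).ne'),
        Real.log_prod fun i hi => (hA i hi).ne']
    rw [e1, e3, e4]
    unfold condP PMI
    rw [Real.log_div (div_ne_zero (hAWB j).ne' hAW.ne') (div_ne_zero (hAsB j).ne' hAs.ne'),
      Real.log_div (hAWB j).ne' hAW.ne', Real.log_div (hAsB j).ne' hAs.ne',
      Real.log_div (hAsB j).ne' (mul_ne_zero hAs.ne' hb), Real.log_mul hAs.ne' hb]
    simp only [Finset.sum_sub_distrib]
    ring
  have hW : ∀ j, (C.transpose.mulVec (∑ i ∈ W, wv i)) j = ∑ i ∈ W, PMI μ (A i) (B j) := by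
    intro j
    rw [Matrix.mulVec_sum, Finset.sum_apply]
    exact Finset.sum_congr rfl fun i hi => by rw [hwi i hi]
  have ht : tau μ A W = ∑ j, condP μ (jointEvent A W) (B j) * tau μ A W := by
    rw [← Finset.sum_mul, hsum1, one_mul]
  rw [hdot, hdot, hws, ht, ← Finset.sum_sub_distrib, ← Finset.sum_add_distrib,
    ← Finset.sum_sub_distrib]
  refine Finset.sum_congr rfl fun j _ => ?_
  rw [hW]
  beta_reduce
  rw [key j]
  ring

end AnalogiesExplained
end
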